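/- arXiv:1206.3683 — 2 statements merged into one kernel-verified Lean document; each statement's English description precedes it below -/
import Mathlib

section
/- The real Clifford algebras Cl_{q+1,p-1} and Cl_{p,q} are isomorphic as ℝ-algebras whenever p ≥ 1. -/
/-- The quadratic form on `ℝ^(p+q)` with `p` entries `+1` and `q` entries `-1`,
whose Clifford algebra is the real Clifford algebra `Cl_{p,q}`. -/
noncomputable def Qpq (p q : ℕ) : QuadraticForm ℝ (Fin (p + q) → ℝ) :=
  QuadraticMap.weightedSumSquares ℝ (fun i : Fin (p + q) => if (i : ℕ) < p then (1 : ℝ) else -1)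

/-!
Write `⟨1⟩ ⊥ Q` for the orthogonal sum of the form `r ↦ r²` with a quadratic form `Q`, and let `e`
be its first basis vector, so that `e² = 1` in the Clifford algebra and `e` anticommutes with every
vector `v` of `Q`. Then `v * e` anticommutes with `e` and has square `-v²`, so `e ↦ e`, `v ↦ v * e`
defines an algebra map `Cl(⟨1⟩ ⊥ -Q) → Cl(⟨1⟩ ⊥ Q)`. Since `(v * e) * e = v`, the analogous map in
the other direction is its inverse. With `Q` of signature `(p - 1, q)`, the two forms have
signatures `(q + 1, p - 1)` and `(p, q)`.
-/

open CliffordAlgebra QuadraticMap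

section Anticommute

variable {A : Type*} [Ring A] {a b : A}

theorem add_mul_self_of_anticommute (h : a * b = -(b * a)) :
    (a + b) * (a + b) = a * a + b * b := by
  rw [add_mul, mul_add, mul_add, h]
  abel

theorem mul_mul_right_of_anticommute (h : a * b = -(b * a)) : a * (b * a) = -(b * a * a) := by
  rw [← mul_assoc, h, neg_mul]

theorem mul_mul_self_of_anticommute (h : a * b = -(b * a)) :
    b * a * (b * a) = -(b * b * (a * a)) := by
  rw [mul_assoc, mul_mul_right_of_anticommute h, mul_neg, mul_assoc, mul_assoc]

end Anticommute

section LiftProd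

variable {R M₁ M₂ A : Type*} [CommRing R] [AddCommGroup M₁] [Module R M₁] [AddCommGroup M₂]
  [Module R M₂] [Ring A] [Algebra R A] {Q₁ : QuadraticForm R M₁} {Q₂ : QuadraticForm R M₂}

/-- The universal property of the Clifford algebra of an orthogonal sum: two Clifford maps into `A`
whose values anticommute extend to an algebra map. -/
def cliffordLiftProd (f₁ : M₁ →ₗ[R] A) (f₂ : M₂ →ₗ[R] A)
    (hf₁ : ∀ m, f₁ m * f₁ m = algebraMap R A (Q₁ m))
    (hf₂ : ∀ m, f₂ m * f₂ m = algebraMap R A (Q₂ m))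
    (hf : ∀ m₁ m₂, f₁ m₁ * f₂ m₂ = -(f₂ m₂ * f₁ m₁)) :
    CliffordAlgebra (Q₁.prod Q₂) →ₐ[R] A :=
  lift (Q₁.prod Q₂) ⟨f₁.coprod f₂, fun m => by
    rw [LinearMap.coprod_apply, add_mul_self_of_anticommute (hf _ _), hf₁, hf₂, prod_apply,
      map_add]⟩

theorem cliffordLiftProd_ι_inl (f₁ : M₁ →ₗ[R] A) (f₂ : M₂ →ₗ[R] A)
    (hf₁ : ∀ m, f₁ m * f₁ m = algebraMap R A (Q₁ m))
    (hf₂ : ∀ m, f₂ m * f₂ m = algebraMap R A (Q₂ m))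
    (hf : ∀ m₁ m₂, f₁ m₁ * f₂ m₂ = -(f₂ m₂ * f₁ m₁)) (m : M₁) :
    cliffordLiftProd f₁ f₂ hf₁ hf₂ hf (ι (Q₁.prod Q₂) (m, 0)) = f₁ m := by
  simp [cliffordLiftProd]

theorem cliffordLiftProd_ι_inr (f₁ : M₁ →ₗ[R] A) (f₂ : M₂ →ₗ[R] A)
    (hf₁ : ∀ m, f₁ m * f₁ m = algebraMap R A (Q₁ m))
    (hf₂ : ∀ m, f₂ m * f₂ m = algebraMap R A (Q₂ m))
    (hf : ∀ m₁ m₂, f₁ m₁ * f₂ m₂ = -(f₂ m₂ * f₁ m₁)) (m : M₂) :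
    cliffordLiftProd f₁ f₂ hf₁ hf₂ hf (ι (Q₁.prod Q₂) (0, m)) = f₂ m := by
  simp [cliffordLiftProd]

theorem ι_inl_mul_ι_inr (m₁ : M₁) (m₂ : M₂) :
    ι (Q₁.prod Q₂) (m₁, 0) * ι (Q₁.prod Q₂) (0, m₂) =
      -(ι (Q₁.prod Q₂) (0, m₂) * ι (Q₁.prod Q₂) (m₁, 0)) :=
  ι_mul_ι_comm_of_isOrtho (IsOrtho.inl_inr m₁ m₂)

end LiftProd

section Twist

variable {R M : Type*} [CommRing R] [AddCommGroup M] [Module R M]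

/-- The orthogonal sum `⟨1⟩ ⊥ Q`, on `R × M`; its first basis vector is `(1, 0)`. -/
abbrev sqProd (Q : QuadraticForm R M) : QuadraticForm R (R × M) :=
  QuadraticMap.sq.prod Q

theorem ι_sqProd_one_zero_mul_self (Q : QuadraticForm R M) :
    ι (sqProd Q) (1, 0) * ι (sqProd Q) (1, 0) = 1 := by
  simp [ι_sq_scalar]

theorem ι_inr_mul_ι_one_zero_mul_self (Q : QuadraticForm R M) (m : M) :
    ι (sqProd Q) (0, m) * ι (sqProd Q) (1, 0) * (ι (sqProd Q) (0, m) * ι (sqProd Q) (1, 0)) =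
      -algebraMap R (CliffordAlgebra (sqProd Q)) (Q m) := by
  rw [mul_mul_self_of_anticommute (ι_inl_mul_ι_inr 1 m), ι_sqProd_one_zero_mul_self, mul_one,
    ι_sq_scalar]
  simp

theorem ι_inl_mul_ι_inr_mul_ι_one_zero (Q : QuadraticForm R M) (r : R) (m : M) :
    ι (sqProd Q) (r, 0) * (ι (sqProd Q) (0, m) * ι (sqProd Q) (1, 0)) =
      -(ι (sqProd Q) (0, m) * ι (sqProd Q) (1, 0) * ι (sqProd Q) (r, 0)) := by
  have hr : ((r, 0) : R × M) = r • (1, 0) := by simp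
  rw [hr, map_smul, smul_mul_assoc, mul_mul_right_of_anticommute (ι_inl_mul_ι_inr 1 m),
    mul_smul_comm, smul_neg]

/-- The algebra map `Cl(⟨1⟩ ⊥ Q) → Cl(⟨1⟩ ⊥ Q')` that fixes the first basis vector `e` and sends
each vector `v` of `Q` to `v * e`. Taking `Q'` with a proof of `Q = -Q'`, rather than `-Q` itself,
makes the inverse map an instance of the same definition. -/
def sqProdTwist (Q Q' : QuadraticForm R M) (h : Q = -Q') :
    CliffordAlgebra (sqProd Q) →ₐ[R] CliffordAlgebra (sqProd Q') :=
  cliffordLiftProd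
    (ι (sqProd Q') ∘ₗ LinearMap.inl R R M)
    (LinearMap.mulRight R (ι (sqProd Q') (1, 0)) ∘ₗ ι (sqProd Q') ∘ₗ LinearMap.inr R R M)
    (fun r => by simp [ι_sq_scalar])
    (fun m => by simp [ι_inr_mul_ι_one_zero_mul_self, h])
    (ι_inl_mul_ι_inr_mul_ι_one_zero Q')

@[simp]
theorem sqProdTwist_ι_inl (Q Q' : QuadraticForm R M) (h : Q = -Q') (r : R) :
    sqProdTwist Q Q' h (ι (sqProd Q) (r, 0)) = ι (sqProd Q') (r, 0) :=
  cliffordLiftProd_ι_inl _ _ _ _ _ r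

@[simp]
theorem sqProdTwist_ι_inr (Q Q' : QuadraticForm R M) (h : Q = -Q') (m : M) :
    sqProdTwist Q Q' h (ι (sqProd Q) (0, m)) = ι (sqProd Q') (0, m) * ι (sqProd Q') (1, 0) :=
  cliffordLiftProd_ι_inr _ _ _ _ _ m

theorem sqProdTwist_comp_sqProdTwist (Q Q' : QuadraticForm R M) (h : Q = -Q') (h' : Q' = -Q) :
    (sqProdTwist Q' Q h').comp (sqProdTwist Q Q' h) = AlgHom.id R _ := by
  ext m
  · simp
  · simp [mul_assoc]

/-- The isomorphism `Cl(⟨1⟩ ⊥ -Q) ≅ Cl(⟨1⟩ ⊥ Q)`. -/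
def sqProdNegEquiv (Q : QuadraticForm R M) :
    CliffordAlgebra (sqProd (-Q)) ≃ₐ[R] CliffordAlgebra (sqProd Q) :=
  AlgEquiv.ofAlgHom (sqProdTwist (-Q) Q rfl) (sqProdTwist Q (-Q) (neg_neg Q).symm)
    (sqProdTwist_comp_sqProdTwist _ _ _ _) (sqProdTwist_comp_sqProdTwist _ _ _ _)

end Twist

section Diagonal

variable {R : Type*} [CommRing R]

theorem weightedSumSquares_equivalent_comp {κ κ' : Type*} [Fintype κ] [Fintype κ'] (σ : κ' ≃ κ)
    (w : κ → R) : (weightedSumSquares R w).Equivalent (weightedSumSquares R (w ∘ σ)) :=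
  ⟨⟨LinearEquiv.funCongrLeft R R σ, fun x => by
    simpa using σ.sum_comp fun i => w i * (x i * x i)⟩⟩

theorem weightedSumSquares_cons_equivalent {n : ℕ} (a : R) (w : Fin n → R) :
    (weightedSumSquares R (Fin.cons a w : Fin (n + 1) → R)).Equivalent
      ((a • QuadraticMap.sq).prod (weightedSumSquares R w)) :=
  Equivalent.symm ⟨⟨Fin.consLinearEquiv R fun _ => R, fun x => by
    simp [Fin.consLinearEquiv, Fin.sum_univ_succ]⟩⟩

theorem weightedSumSquares_neg {κ : Type*} [Fintype κ] (w : κ → R) :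
    weightedSumSquares R (-w) = -weightedSumSquares R w := by
  ext x
  simp

end Diagonal

section Signature

variable (R : Type*) [CommRing R]

/-- The `n` diagonal entries of a form of signature `(p, n - p)`: `p` times `+1`, then `-1`. -/
def signatureWeights (n p : ℕ) : Fin n → R :=
  fun i => if (i : ℕ) < p then 1 else -1

/-- The quadratic form on `R^(p+q)` with `p` entries `+1` and `q` entries `-1`; over `ℝ` it is
`Qpq p q`. -/
def signatureForm (p q : ℕ) : QuadraticForm R (Fin (p + q) → R) :=
  weightedSumSquares R (signatureWeights R (p + q) p)

theorem signatureWeights_succ_comp_finCongr {m n : ℕ} (h : n + 1 = m) (p : ℕ) :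
    signatureWeights R m (p + 1) ∘ finCongr h = Fin.cons 1 (signatureWeights R n p) := by
  ext i
  cases i using Fin.cases <;> simp [signatureWeights]

theorem signatureWeights_comp_finAddFlip (p q : ℕ) :
    signatureWeights R (q + p) q ∘ finAddFlip = -signatureWeights R (p + q) p := by
  ext i
  cases i using Fin.addCases <;> simp [signatureWeights]

theorem signatureForm_succ_equivalent (p q : ℕ) :
    (signatureForm R (p + 1) q).Equivalent (sqProd (signatureForm R p q)) := by
  have hpq : p + q + 1 = p + 1 + q := Nat.add_right_comm p q 1
  have hreindex := weightedSumSquares_equivalent_comp (finCongr hpq)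
    (signatureWeights R (p + 1 + q) (p + 1))
  have hsplit := weightedSumSquares_cons_equivalent 1 (signatureWeights R (p + q) p)
  rw [signatureWeights_succ_comp_finCongr] at hreindex
  rw [one_smul] at hsplit
  exact hreindex.trans hsplit

theorem signatureForm_swap_equivalent (p q : ℕ) :
    (signatureForm R q p).Equivalent (-signatureForm R p q) := by
  rw [signatureForm, signatureForm, ← weightedSumSquares_neg, ← signatureWeights_comp_finAddFlip]
  exact weightedSumSquares_equivalent_comp finAddFlip _

end Signature

theorem clifford_iso_q1_p1_general (R : Type*) [CommRing R] (p q : ℕ) :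
    Nonempty (CliffordAlgebra (signatureForm R (q + 1) p) ≃ₐ[R]
      CliffordAlgebra (signatureForm R (p + 1) q)) := by
  obtain ⟨splitSource⟩ := (signatureForm_succ_equivalent R q p).trans
    ((Equivalent.refl _).prod (signatureForm_swap_equivalent R p q))
  obtain ⟨splitTarget⟩ := signatureForm_succ_equivalent R p q
  exact ⟨(equivOfIsometry splitSource).trans <|
    (sqProdNegEquiv (signatureForm R p q)).trans (equivOfIsometry splitTarget.symm)⟩

/-- `Cl_{q+1,p-1} ≅ Cl_{p,q}` as `ℝ`-algebras whenever `p ≥ 1`. -/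
theorem clifford_iso_q1_p1 (p q : ℕ) (hp : 1 ≤ p) :
    Nonempty (CliffordAlgebra (Qpq (q + 1) (p - 1)) ≃ₐ[ℝ] CliffordAlgebra (Qpq p q)) := by
  obtain ⟨p, rfl⟩ := Nat.exists_eq_add_of_le' hp
  exact clifford_iso_q1_p1_general ℝ p q
end

section
/- The real Clifford algebra Cl_{p,q+8} is isomorphic as an ℝ-algebra to the algebra of 16×16 matrices over Cl_{p,q}. -/
/-!
If `Q₂` carries an even volume element `ω` with `ω² = ε` a unit, then `ω` commutes with the vectors
of `Q₁` inside `Cl(Q₁ ⊥ Q₂)` and anticommutes with those of `Q₂`, so `m ↦ m ω` turns the vectors of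
`Q₁` into elements that commute with `Cl(Q₂)`: the graded tensor product becomes an ungraded one,
`Cl(Q₁ ⊥ Q₂) ≃ Cl(ε⁻¹ Q₁) ⊗ Cl(Q₂)`. For `Q₂ = ⟨c, c⟩` the sign is `ε = -1`, and two applications
give `Cl(Q ⊥ 4⟨c⟩) ≃ Cl(Q) ⊗ Cl(⟨-c, -c⟩) ⊗ Cl(⟨c, c⟩)`, which is symmetric in `c` and `-c`. Hence
`8⟨c⟩` may be traded for `4⟨c⟩ ⊥ 4⟨-c⟩`, a sum of four hyperbolic planes `⟨c, -c⟩`. For each of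
them `ε = 1` and `Cl(⟨c, -c⟩)` is a split quaternion algebra, so it contributes a tensor factor
`M₂(R)`.
-/

namespace CliffordPeriodicity

open CliffordAlgebra QuadraticMap
open CliffordAlgebraQuaternion renaming Q → binaryForm
open scoped TensorProduct Quaternion

variable {R M M₁ M₂ M₃ : Type*} [CommRing R]
  [AddCommGroup M] [Module R M] [AddCommGroup M₁] [Module R M₁]
  [AddCommGroup M₂] [Module R M₂] [AddCommGroup M₃] [Module R M₃]

section TensorProduct

variable {Q : QuadraticForm R M} {Q₁ Q₁' : QuadraticForm R M₁} {Q₂ : QuadraticForm R M₂}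

theorem commute_of_commute_ι {A : Type*} [Ring A] [Algebra R A] {φ : CliffordAlgebra Q →ₐ[R] A}
    {a : A} (h : ∀ m, Commute (φ (ι Q m)) a) (x : CliffordAlgebra Q) : Commute (φ x) a := by
  induction x using CliffordAlgebra.induction with
  | algebraMap r => rw [AlgHom.commutes]; exact Algebra.commutes r a
  | ι m => exact h m
  | mul x y hx hy => rw [map_mul]; exact hx.mul_left hy
  | add x y hx hy => rw [map_add]; exact hx.add_left hy

/-- An even element that anticommutes with every vector and has scalar square `ε`, such as the
product of an orthogonal basis of even length. -/
structure IsEvenVolumeElement (Q : QuadraticForm R M) (ω : CliffordAlgebra Q) (ε : R) : Prop where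
  mem_even : ω ∈ evenOdd Q 0
  mul_ι (m : M) : ω * ι Q m = -(ι Q m * ω)
  mul_self : ω * ω = algebraMap R _ ε

namespace IsEvenVolumeElement

theorem ι_tmul_add_one_tmul_ι_mul_self {ω : CliffordAlgebra Q₂} {ε : R}
    (hω : IsEvenVolumeElement Q₂ ω ε) (hQ : Q₁ = ε • Q₁') (m₁ : M₁) (m₂ : M₂) :
    (ι Q₁' m₁ ⊗ₜ[R] ω + 1 ⊗ₜ ι Q₂ m₂) * (ι Q₁' m₁ ⊗ₜ[R] ω + 1 ⊗ₜ ι Q₂ m₂) =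
      algebraMap R _ (Q₁ m₁ + Q₂ m₂) := by
  have hcross :
      (ι Q₁' m₁ ⊗ₜ[R] ω) * (1 ⊗ₜ ι Q₂ m₂) + (1 ⊗ₜ ι Q₂ m₂) * (ι Q₁' m₁ ⊗ₜ ω) = 0 := by
    simp [hω.mul_ι, TensorProduct.tmul_neg]
  have hsq₁ : (ι Q₁' m₁ ⊗ₜ[R] ω) * (ι Q₁' m₁ ⊗ₜ ω) = algebraMap R _ (Q₁ m₁) := by
    rw [Algebra.TensorProduct.tmul_mul_tmul, ι_sq_scalar, hω.mul_self, hQ, smul_apply,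
      Algebra.algebraMap_eq_smul_one, Algebra.algebraMap_eq_smul_one, TensorProduct.smul_tmul_smul,
      Algebra.algebraMap_eq_smul_one, Algebra.TensorProduct.one_def, smul_eq_mul, mul_comm]
  have hsq₂ : ((1 : CliffordAlgebra Q₁') ⊗ₜ[R] ι Q₂ m₂) * (1 ⊗ₜ ι Q₂ m₂) =
      algebraMap R _ (Q₂ m₂) := by
    rw [Algebra.TensorProduct.tmul_mul_tmul, ι_sq_scalar, one_mul,
      Algebra.TensorProduct.algebraMap_apply']
  rw [map_add, ← hsq₁, ← hsq₂]
  linear_combination (norm := noncomm_ring) hcross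

theorem commute_ι_inl_map_inr {ω : CliffordAlgebra Q₂} {ε : R}
    (hω : IsEvenVolumeElement Q₂ ω ε) (m : M₁) :
    Commute (ι (Q₁.prod Q₂) (m, 0)) (map (QuadraticMap.Isometry.inr Q₁ Q₂) ω) := by
  simpa using commute_map_mul_map_of_isOrtho_of_mem_evenOdd_zero_right
    (QuadraticMap.Isometry.inl Q₁ Q₂) (QuadraticMap.Isometry.inr Q₁ Q₂) IsOrtho.inl_inr _ _
    (ι_mem_evenOdd_one Q₁ m) hω.mem_even

theorem ι_inl_mul_map_inr_mul_self {ω : CliffordAlgebra Q₂} {ε : R}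
    (hω : IsEvenVolumeElement Q₂ ω ε) (m : M₁) :
    ι (Q₁.prod Q₂) (m, 0) * map (QuadraticMap.Isometry.inr Q₁ Q₂) ω *
        (ι (Q₁.prod Q₂) (m, 0) * map (QuadraticMap.Isometry.inr Q₁ Q₂) ω) =
      algebraMap R _ (ε * Q₁ m) := by
  rw [(hω.commute_ι_inl_map_inr m).symm.mul_mul_mul_comm, ι_sq_scalar, ← map_mul, hω.mul_self,
    AlgHom.commutes, ← map_mul, QuadraticMap.prod_apply, map_zero, add_zero, mul_comm]

variable {ω : CliffordAlgebra Q₂} {ε : Rˣ}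

/-- The algebra map `Cl(Q₁ ⊥ Q₂) → Cl(Q₁') ⊗ Cl(Q₂)` with `(m₁, m₂) ↦ m₁ ⊗ ω + 1 ⊗ m₂`. -/
def toTensor (hω : IsEvenVolumeElement Q₂ ω ε) (hQ : Q₁ = (ε : R) • Q₁') :
    CliffordAlgebra (Q₁.prod Q₂) →ₐ[R] CliffordAlgebra Q₁' ⊗[R] CliffordAlgebra Q₂ :=
  CliffordAlgebra.lift _
    ⟨((TensorProduct.mk R _ _).flip ω ∘ₗ ι Q₁').coprod (TensorProduct.mk R _ _ 1 ∘ₗ ι Q₂),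
      fun m => hω.ι_tmul_add_one_tmul_ι_mul_self hQ m.1 m.2⟩

/-- The algebra map `Cl(Q₁') → Cl(Q₁ ⊥ Q₂)` with `m ↦ ε⁻¹ m ω`. -/
def twistedInl (hω : IsEvenVolumeElement Q₂ ω ε) (hQ : Q₁ = (ε : R) • Q₁') :
    CliffordAlgebra Q₁' →ₐ[R] CliffordAlgebra (Q₁.prod Q₂) :=
  CliffordAlgebra.lift _
    ⟨(↑ε⁻¹ : R) • LinearMap.mulRight R (map (QuadraticMap.Isometry.inr Q₁ Q₂) ω) ∘ₗ
        ι (Q₁.prod Q₂) ∘ₗ LinearMap.inl R M₁ M₂, fun m => by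
      simp [hω.ι_inl_mul_map_inr_mul_self, hQ, Algebra.algebraMap_eq_smul_one, smul_smul]⟩

@[simp]
theorem toTensor_ι (hω : IsEvenVolumeElement Q₂ ω ε) (hQ : Q₁ = (ε : R) • Q₁') (m : M₁ × M₂) :
    hω.toTensor hQ (ι _ m) = ι Q₁' m.1 ⊗ₜ ω + 1 ⊗ₜ ι Q₂ m.2 :=
  CliffordAlgebra.lift_ι_apply _ _ _

@[simp]
theorem twistedInl_ι (hω : IsEvenVolumeElement Q₂ ω ε) (hQ : Q₁ = (ε : R) • Q₁') (m : M₁) :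
    hω.twistedInl hQ (ι _ m) =
      (↑ε⁻¹ : R) • (ι (Q₁.prod Q₂) (m, 0) * map (QuadraticMap.Isometry.inr Q₁ Q₂) ω) :=
  CliffordAlgebra.lift_ι_apply _ _ _

theorem commute_twistedInl_map_inr (hω : IsEvenVolumeElement Q₂ ω ε) (hQ : Q₁ = (ε : R) • Q₁')
    (x : CliffordAlgebra Q₁') (y : CliffordAlgebra Q₂) :
    Commute (hω.twistedInl hQ x) (map (QuadraticMap.Isometry.inr Q₁ Q₂) y) := by
  refine commute_of_commute_ι (fun m₁ => ?_) x
  refine (commute_of_commute_ι (fun m₂ => ?_) y).symm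
  have hanti : ι (Q₁.prod Q₂) (0, m₂) * ι (Q₁.prod Q₂) (m₁, 0) =
      -(ι (Q₁.prod Q₂) (m₁, 0) * ι (Q₁.prod Q₂) (0, m₂)) :=
    ι_mul_ι_comm_of_isOrtho (IsOrtho.inl_inr m₁ m₂).symm
  have hωanti : map (QuadraticMap.Isometry.inr Q₁ Q₂) ω * ι (Q₁.prod Q₂) (0, m₂) =
      -(ι (Q₁.prod Q₂) (0, m₂) * map (QuadraticMap.Isometry.inr Q₁ Q₂) ω) := by
    simpa using congrArg (map (QuadraticMap.Isometry.inr Q₁ Q₂)) (hω.mul_ι m₂)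
  rw [twistedInl_ι, map_apply_ι, QuadraticMap.Isometry.inr_apply]
  refine Commute.smul_right ?_ _
  rw [commute_iff_eq, ← mul_assoc, hanti, mul_assoc, hωanti]
  noncomm_ring

/-- The algebra map `Cl(Q₁') ⊗ Cl(Q₂) → Cl(Q₁ ⊥ Q₂)` inverse to `toTensor`. -/
def ofTensor (hω : IsEvenVolumeElement Q₂ ω ε) (hQ : Q₁ = (ε : R) • Q₁') :
    CliffordAlgebra Q₁' ⊗[R] CliffordAlgebra Q₂ →ₐ[R] CliffordAlgebra (Q₁.prod Q₂) :=
  Algebra.TensorProduct.lift (hω.twistedInl hQ) (map (QuadraticMap.Isometry.inr Q₁ Q₂))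
    (hω.commute_twistedInl_map_inr hQ)

theorem toTensor_comp_map_inr (hω : IsEvenVolumeElement Q₂ ω ε) (hQ : Q₁ = (ε : R) • Q₁') :
    (hω.toTensor hQ).comp (map (QuadraticMap.Isometry.inr Q₁ Q₂)) =
      Algebra.TensorProduct.includeRight := by
  ext m
  simp

/-- Volume elements untwist an orthogonal sum of quadratic forms to an ungraded tensor product:
`Cl(Q₁ ⊥ Q₂) ≃ Cl(ε⁻¹ Q₁) ⊗ Cl(Q₂)`, with `ε⁻¹ Q₁` presented as a form `Q₁'`. -/
def prodEquivTensor (hω : IsEvenVolumeElement Q₂ ω ε) (hQ : Q₁ = (ε : R) • Q₁') :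
    CliffordAlgebra (Q₁.prod Q₂) ≃ₐ[R] CliffordAlgebra Q₁' ⊗[R] CliffordAlgebra Q₂ :=
  AlgEquiv.ofAlgHom (hω.toTensor hQ) (hω.ofTensor hQ)
    (by
      have hmap (x) : hω.toTensor hQ (map (QuadraticMap.Isometry.inr Q₁ Q₂) x) = 1 ⊗ₜ x :=
        DFunLike.congr_fun (hω.toTensor_comp_map_inr hQ) x
      ext m
      · simp [ofTensor, hmap, hω.mul_self, Algebra.algebraMap_eq_smul_one, smul_smul]
      · simp [ofTensor])
    (by
      ext m
      · simp [ofTensor, mul_assoc, ← map_mul, hω.mul_self, Algebra.algebraMap_eq_smul_one,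
          smul_smul]
      · simp [ofTensor])

end IsEvenVolumeElement
end TensorProduct

section BinaryForm

theorem isEvenVolumeElement_binaryForm {a b s ε : R} (hε : -(s * s * (a * b)) = ε) :
    IsEvenVolumeElement (binaryForm a b)
      (s • (CliffordAlgebraQuaternion.quaternionBasis a b).k) ε where
  mem_even := Submodule.smul_mem _ _ (ι_mul_ι_mem_evenOdd_zero _ _ _)
  mul_ι m := by
    have hm : ι (binaryForm a b) m =
        m.1 • (CliffordAlgebraQuaternion.quaternionBasis a b).i +
          m.2 • (CliffordAlgebraQuaternion.quaternionBasis a b).j := by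
      simp [← map_smul, ← map_add]
    rw [hm]
    generalize CliffordAlgebraQuaternion.quaternionBasis a b = q
    simp only [mul_add, add_mul, mul_smul_comm, smul_mul_assoc, q.k_mul_i, q.k_mul_j, q.i_mul_k,
      q.j_mul_k]
    module
  mul_self := by
    generalize CliffordAlgebraQuaternion.quaternionBasis a b = q
    rw [smul_mul_smul_comm, q.k_mul_k, Algebra.algebraMap_eq_smul_one, ← hε]
    module

/-- The matrices `!![0, a; 1, 0]` and `!![0, -a; 1, 0]` as a quaternion basis of `M₂(R)`. -/
def splitQuaternionBasis (a : R) : QuaternionAlgebra.Basis (Matrix (Fin 2) (Fin 2) R) a 0 (-a) where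
  i := !![0, a; 1, 0]
  j := !![0, -a; 1, 0]
  k := !![a, 0; 0, -a]
  i_mul_i := by simp [Matrix.one_fin_two]
  j_mul_j := by simp [Matrix.one_fin_two]
  i_mul_j := by simp
  j_mul_i := by simp

theorem splitQuaternionBasis_lift (a : R) (x : ℍ[R,a,0,-a]) :
    (splitQuaternionBasis a).lift x =
      !![x.re + a * x.imK, a * (x.imI - x.imJ); x.imI + x.imJ, x.re - a * x.imK] := by
  simp [QuaternionAlgebra.Basis.lift, splitQuaternionBasis, Algebra.algebraMap_eq_smul_one,
    Matrix.one_fin_two, mul_add, sub_eq_add_neg, mul_comm]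

/-- The splitting `ℍ[R,c,0,-c] ≃ M₂(R)` of the quaternion algebra `(c, -c)`. -/
def splitQuaternionEquivMatrix [Invertible (2 : R)] (c : Rˣ) :
    ℍ[R,(c : R),0,-(c : R)] ≃ₐ[R] Matrix (Fin 2) (Fin 2) R :=
  { (splitQuaternionBasis (c : R)).liftHom with
    invFun := fun m =>
      ⟨⅟2 * (m 0 0 + m 1 1), ⅟2 * (m 1 0 + ↑c⁻¹ * m 0 1), ⅟2 * (m 1 0 - ↑c⁻¹ * m 0 1),
        ↑c⁻¹ * (⅟2 * (m 0 0 - m 1 1))⟩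
    left_inv := fun x => by
      ext <;> simp [splitQuaternionBasis_lift, ← two_mul]
    right_inv := fun m => by
      have hhalf (x y : R) : ⅟2 * (x + y) + ⅟2 * (x - y) = x := by
        rw [← mul_add, add_add_sub_cancel, ← two_mul, invOf_mul_cancel_left]
      have hhalf' (x y : R) : ⅟2 * (x + y) - ⅟2 * (x - y) = y := by
        rw [← mul_sub, add_sub_sub_cancel, ← two_mul, invOf_mul_cancel_left]
      rw [Matrix.eta_fin_two m]
      simp [splitQuaternionBasis_lift, hhalf, hhalf'] }

/-- `Cl(Q ⊥ ⟨c, c⟩) ≃ Cl(-Q) ⊗ Cl(⟨c, c⟩)`, with `-Q` presented as a form `Q'`. -/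
def prodBinaryFormEquivTensor {Q Q' : QuadraticForm R M} (hQ : Q = -Q') (c : Rˣ) :
    CliffordAlgebra (Q.prod (binaryForm (c : R) c)) ≃ₐ[R]
      CliffordAlgebra Q' ⊗[R] CliffordAlgebra (binaryForm (c : R) c) :=
  (isEvenVolumeElement_binaryForm (s := ↑c⁻¹) (ε := ((-1 : Rˣ) : R))
    (by simp [mul_mul_mul_comm])).prodEquivTensor (by ext; simp [hQ])

/-- A hyperbolic plane contributes a factor `M₂(R)`: `Cl(Q ⊥ ⟨c, -c⟩) ≃ M₂(Cl(Q))`. -/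
def prodHyperbolicEquivMatrix [Invertible (2 : R)] (Q : QuadraticForm R M) (c : Rˣ) :
    CliffordAlgebra (Q.prod (binaryForm (c : R) (-c))) ≃ₐ[R]
      Matrix (Fin 2) (Fin 2) (CliffordAlgebra Q) :=
  ((isEvenVolumeElement_binaryForm (s := ↑c⁻¹) (ε := ((1 : Rˣ) : R))
    (by simp [mul_mul_mul_comm])).prodEquivTensor (by simp)).trans <|
  (Algebra.TensorProduct.congr AlgEquiv.refl
    (CliffordAlgebraQuaternion.equiv.trans (splitQuaternionEquivMatrix c))).trans
  (matrixEquivTensor (Fin 2) R (CliffordAlgebra Q)).symm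

end BinaryForm

section Periodicity

/-- Reassociation of orthogonal sums of quadratic forms. -/
def prodAssocIsometryEquiv (Q₁ : QuadraticForm R M₁) (Q₂ : QuadraticForm R M₂)
    (Q₃ : QuadraticForm R M₃) :
    ((Q₁.prod Q₂).prod Q₃).IsometryEquiv (Q₁.prod (Q₂.prod Q₃)) where
  toLinearEquiv := LinearEquiv.prodAssoc R M₁ M₂ M₃
  map_app' m := (add_assoc (Q₁ m.1.1) (Q₂ m.1.2) (Q₃ m.2)).symm

/-- The quaternary form `⟨c, c, c, c⟩`, split into two binary forms. -/
abbrev quaternaryForm (c : R) : QuadraticForm R ((R × R) × R × R) :=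
  (binaryForm c c).prod (binaryForm c c)

/-- `Cl(Q ⊥ ⟨c, c, c, c⟩) ≃ Cl(Q) ⊗ (Cl(⟨d, d⟩) ⊗ Cl(⟨c, c⟩))` for `c = -d`. -/
def prodQuaternaryFormEquivTensor (Q : QuadraticForm R M) {c d : Rˣ} (h : (c : R) = -d) :
    CliffordAlgebra (Q.prod (quaternaryForm (c : R))) ≃ₐ[R]
      CliffordAlgebra Q ⊗[R]
        (CliffordAlgebra (binaryForm (d : R) d) ⊗[R] CliffordAlgebra (binaryForm (c : R) c)) :=
  have hQ : Q.prod (binaryForm (c : R) c) = -((-Q).prod (binaryForm (d : R) d)) := by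
    ext m
    simp only [prod_apply, neg_apply, CliffordAlgebraQuaternion.Q_apply, h]
    ring
  (equivOfIsometry (prodAssocIsometryEquiv Q _ _).symm).trans <|
  (prodBinaryFormEquivTensor hQ c).trans <|
  (Algebra.TensorProduct.congr (prodBinaryFormEquivTensor rfl d) AlgEquiv.refl).trans
  (Algebra.TensorProduct.assoc R R R _ _ _)

/-- The sign of a summand `⟨c, c, c, c⟩` does not affect the Clifford algebra. -/
def prodQuaternaryFormEquivNeg (Q : QuadraticForm R M) (c : Rˣ) :
    CliffordAlgebra (Q.prod (quaternaryForm (c : R))) ≃ₐ[R]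
      CliffordAlgebra (Q.prod (quaternaryForm (-(c : R)))) :=
  (prodQuaternaryFormEquivTensor Q (d := -c) (by simp)).trans <|
  (Algebra.TensorProduct.congr AlgEquiv.refl (Algebra.TensorProduct.comm R _ _)).trans
  (prodQuaternaryFormEquivTensor Q (c := -c) (d := c) rfl).symm

/-- Block matrices `M_m(M_n(A)) ≃ M_{mn}(A)`. -/
def matrixMatrixEquiv (R A : Type*) [CommRing R] [Ring A] [Algebra R A] (m n : ℕ) :
    Matrix (Fin m) (Fin m) (Matrix (Fin n) (Fin n) A) ≃ₐ[R] Matrix (Fin (m * n)) (Fin (m * n)) A :=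
  (Matrix.compAlgEquiv _ _ A R).trans (Matrix.reindexAlgEquiv R A finProdFinEquiv)

/-- The form `⟨c, c, -c, -c⟩`, a sum of two hyperbolic planes. -/
abbrev neutralForm (c : R) : QuadraticForm R ((R × R) × R × R) :=
  (binaryForm c c).prod (binaryForm (-c) (-c))

/-- `⟨c, c, -c, -c⟩ ≅ ⟨c, -c⟩ ⊥ ⟨c, -c⟩`. -/
def neutralFormIsometryEquiv (c : R) :
    (neutralForm c).IsometryEquiv ((binaryForm c (-c)).prod (binaryForm c (-c))) :=
  IsometryEquiv.prodProdProdComm (c • QuadraticMap.sq) (c • QuadraticMap.sq)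
    (-c • QuadraticMap.sq) (-c • QuadraticMap.sq)

/-- `4⟨c⟩ ⊥ 4⟨-c⟩ ≅ 2⟨c, -c⟩ ⊥ 2⟨c, -c⟩`. -/
def quaternaryFormProdNegIsometryEquiv (c : R) :
    ((quaternaryForm c).prod (quaternaryForm (-c))).IsometryEquiv
      ((neutralForm c).prod (neutralForm c)) :=
  IsometryEquiv.prodProdProdComm (binaryForm c c) (binaryForm c c)
    (binaryForm (-c) (-c)) (binaryForm (-c) (-c))

variable [Invertible (2 : R)] (Q : QuadraticForm R M) (c : Rˣ)

/-- `Cl(Q ⊥ ⟨c, c, -c, -c⟩) ≃ M₄(Cl(Q))`. -/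
def prodNeutralFormEquivMatrix :
    CliffordAlgebra (Q.prod (neutralForm (c : R))) ≃ₐ[R]
      Matrix (Fin 4) (Fin 4) (CliffordAlgebra Q) :=
  (equivOfIsometry <|
    ((QuadraticMap.IsometryEquiv.refl Q).prod (neutralFormIsometryEquiv (c : R))).trans
      (prodAssocIsometryEquiv Q _ _).symm).trans <|
  (prodHyperbolicEquivMatrix (Q.prod (binaryForm (c : R) (-c))) c).trans <|
  (prodHyperbolicEquivMatrix Q c).mapMatrix.trans
  (matrixMatrixEquiv R (CliffordAlgebra Q) 2 2)

/-- `Cl(Q ⊥ 4⟨c⟩ ⊥ 4⟨-c⟩) ≃ M₁₆(Cl(Q))`. -/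
def prodQuaternaryFormProdNegEquivMatrix :
    CliffordAlgebra (Q.prod ((quaternaryForm (c : R)).prod (quaternaryForm (-(c : R))))) ≃ₐ[R]
      Matrix (Fin 16) (Fin 16) (CliffordAlgebra Q) :=
  (equivOfIsometry <|
    ((QuadraticMap.IsometryEquiv.refl Q).prod (quaternaryFormProdNegIsometryEquiv (c : R))).trans
      (prodAssocIsometryEquiv Q _ _).symm).trans <|
  (prodNeutralFormEquivMatrix (Q.prod (neutralForm (c : R))) c).trans <|
  (prodNeutralFormEquivMatrix Q c).mapMatrix.trans
  (matrixMatrixEquiv R (CliffordAlgebra Q) 4 4)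

/-- `Cl(Q ⊥ 8⟨c⟩) ≃ M₁₆(Cl(Q))`. -/
def prodQuaternaryFormProdEquivMatrix :
    CliffordAlgebra (Q.prod ((quaternaryForm (c : R)).prod (quaternaryForm (c : R)))) ≃ₐ[R]
      Matrix (Fin 16) (Fin 16) (CliffordAlgebra Q) :=
  (equivOfIsometry (prodAssocIsometryEquiv Q _ _).symm).trans <|
  (prodQuaternaryFormEquivNeg (Q.prod (quaternaryForm (c : R))) c).trans <|
  (equivOfIsometry (prodAssocIsometryEquiv Q _ _)).trans
  (prodQuaternaryFormProdNegEquivMatrix Q c)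

end Periodicity

section WeightedSumSquares

/-- A partition of the variables of a diagonal form splits it into an orthogonal sum. -/
def weightedSumSquaresIsometryEquivProd {α β γ : Type*} [Fintype α] [Fintype β] [Fintype γ]
    (e : α ⊕ β ≃ γ) {u : α → R} {v : β → R} {w : γ → R}
    (hu : ∀ i, w (e (.inl i)) = u i) (hv : ∀ j, w (e (.inr j)) = v j) :
    (weightedSumSquares R w).IsometryEquiv ((weightedSumSquares R u).prod (weightedSumSquares R v))
    where
  toLinearEquiv :=
    (LinearEquiv.funCongrLeft R R e).trans (LinearEquiv.sumArrowLequivProdArrow α β R R)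
  map_app' x := by
    simp [weightedSumSquares_apply, ← e.sum_comp, hu, hv, LinearEquiv.funCongrLeft]

/-- The diagonal form `⟨c, c⟩` in two variables is `binaryForm c c`. -/
def weightedSumSquaresFinTwoIsometryEquiv (c : R) :
    (weightedSumSquares R fun _ : Fin 2 => c).IsometryEquiv (binaryForm c c) where
  toLinearEquiv := LinearEquiv.finTwoArrow R R
  map_app' x := by simp [weightedSumSquares_apply]

/-- `4⟨c⟩ ≅ 2⟨c⟩ ⊥ 2⟨c⟩`. -/
def weightedSumSquaresFinFourIsometryEquiv (c : R) :
    (weightedSumSquares R fun _ : Fin 4 => c).IsometryEquiv (quaternaryForm c) :=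
  (weightedSumSquaresIsometryEquivProd (finSumFinEquiv (m := 2) (n := 2))
    (fun _ => rfl) (fun _ => rfl)).trans <|
  (weightedSumSquaresFinTwoIsometryEquiv c).prod (weightedSumSquaresFinTwoIsometryEquiv c)

/-- `8⟨c⟩ ≅ 4⟨c⟩ ⊥ 4⟨c⟩`. -/
def weightedSumSquaresFinEightIsometryEquiv (c : R) :
    (weightedSumSquares R fun _ : Fin 8 => c).IsometryEquiv
      ((quaternaryForm c).prod (quaternaryForm c)) :=
  (weightedSumSquaresIsometryEquivProd (finSumFinEquiv (m := 4) (n := 4))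
    (fun _ => rfl) (fun _ => rfl)).trans <|
  (weightedSumSquaresFinFourIsometryEquiv c).prod (weightedSumSquaresFinFourIsometryEquiv c)

/-- Adjoining `n` negative squares to the form of `Cl_{p,q}`. -/
noncomputable def qpqAddIsometryEquiv (p q n : ℕ) :
    (Qpq p (q + n)).IsometryEquiv
      ((Qpq p q).prod (weightedSumSquares ℝ fun _ : Fin n => (-1 : ℝ))) :=
  weightedSumSquaresIsometryEquivProd (finSumFinEquiv.trans (finCongr (add_assoc p q n)))
    (by simp) (fun _ => if_neg (by simp [add_assoc]))

end WeightedSumSquares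

end CliffordPeriodicity

open CliffordPeriodicity in
theorem clifford_iso_q8_general {R M : Type*} [CommRing R] [Invertible (2 : R)] [AddCommGroup M]
    [Module R M] (Q : QuadraticForm R M) (c : Rˣ) :
    Nonempty (CliffordAlgebra (Q.prod (QuadraticMap.weightedSumSquares R fun _ : Fin 8 => (c : R)))
      ≃ₐ[R] Matrix (Fin 16) (Fin 16) (CliffordAlgebra Q)) :=
  ⟨(CliffordAlgebra.equivOfIsometry ((QuadraticMap.IsometryEquiv.refl Q).prod
    (weightedSumSquaresFinEightIsometryEquiv (c : R)))).trans
    (prodQuaternaryFormProdEquivMatrix Q c)⟩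

/-- `Cl_{p,q+8}` is isomorphic as an `ℝ`-algebra to `16×16` matrices over `Cl_{p,q}`. -/
theorem clifford_iso_q8 (p q : ℕ) :
    Nonempty (CliffordAlgebra (Qpq p (q + 8)) ≃ₐ[ℝ]
        Matrix (Fin 16) (Fin 16) (CliffordAlgebra (Qpq p q))) :=
  (clifford_iso_q8_general (Qpq p q) (-1)).map
    (CliffordAlgebra.equivOfIsometry (CliffordPeriodicity.qpqAddIsometryEquiv p q 8)).trans
end
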